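/- arXiv:math/0411259 — 3 statements merged into one kernel-verified Lean document; each statement's English description precedes it below -/
import Mathlib

section
/- Let A be a principal ideal domain. Then the following are equivalent: (i) every maximal ideal of the polynomial ring A[x] has height 2; (ii) A contains infinitely many pairwise nonassociate irreducible elements (i.e., there is an infinite set of irreducible elements of A no two of which are associates). -/
/-!
Since `A` is Noetherian, a maximal ideal `M` of `A[X]` has height `ht (M ∩ A) + 1`, so `M` has
height `2` exactly when the prime `M ∩ A` of the principal ideal domain `A` is nonzero.

If `A` has infinitely many nonassociate irreducibles, then no nonzero element lies in all maximal
ideals, so `A` is a Jacobson ring (`isJacobsonRing_of_infinite_irreducibles`). Over a Jacobson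
ring, a maximal ideal `M` with `M ∩ A = 0` forces `0` to be maximal, i.e. `A` is a field, which is
absurd as a field has no irreducible elements.

If `A` has only finitely many irreducibles up to associates, let `a` be the product of
representatives. A maximal ideal containing `aX - 1` contains no irreducible of `A`, hence meets
`A` in `0` and has height `1`.
-/

open Polynomial

/-- A nonzero element of a principal ideal domain has only finitely many irreducible divisors up
to associates, so infinitely many irreducibles make the Jacobson radical vanish. -/
lemma isJacobsonRing_of_infinite_irreducibles {A : Type*} [CommRing A] [IsDomain A]
    [IsPrincipalIdealRing A] {S : Set A} (hS : S.Infinite) (hirr : ∀ p ∈ S, Irreducible p)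
    (hna : ∀ p ∈ S, ∀ q ∈ S, p ≠ q → ¬ Associated p q) : IsJacobsonRing A := by
  classical
  rw [isJacobsonRing_iff_prime_eq]
  intro P hP
  by_cases hP0 : P = ⊥
  · subst hP0
    rw [eq_bot_iff]
    intro x hx
    by_contra hx0
    have hx0 : x ≠ 0 := hx0
    have hdvd : ∀ p ∈ S, p ∣ x := fun p hp => by
      have hmax : (Ideal.span {p}).IsMaximal :=
        PrincipalIdealRing.isMaximal_of_irreducible (hirr p hp)
      exact Ideal.mem_span_singleton.1 (Ideal.mem_sInf.1 hx ⟨bot_le, hmax⟩)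
    have hex : ∀ p ∈ S, ∃ q ∈ UniqueFactorizationMonoid.factors x, Associated p q :=
      fun p hp =>
        UniqueFactorizationMonoid.exists_mem_factors_of_dvd hx0 (hirr p hp) (hdvd p hp)
    choose! f hf hpf using hex
    refine hS (Set.Finite.of_finite_image (f := f) ?_ ?_)
    · refine (UniqueFactorizationMonoid.factors x).toFinset.finite_toSet.subset ?_
      rintro _ ⟨p, hp, rfl⟩
      simpa using hf p hp
    · intro p hp q hq h
      by_contra hne
      refine hna p hp q hq hne ((hpf p hp).trans ?_)
      rw [h]
      exact (hpf q hq).symm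
  · have : P.IsMaximal := IsPrime.to_maximal_ideal hP0
    exact Ideal.jacobson_eq_self_of_isMaximal

theorem maximal_height_two_iff_infinitely_many_irreducibles
    (A : Type*) [CommRing A] [IsDomain A] [IsPrincipalIdealRing A] :
    (∀ (M : Ideal A[X]) (hM : M.IsMaximal),
      Order.height (⟨M, hM.isPrime⟩ : PrimeSpectrum A[X]) = 2) ↔
    (∃ S : Set A, S.Infinite ∧ (∀ p ∈ S, Irreducible p) ∧
      ∀ p ∈ S, ∀ q ∈ S, p ≠ q → ¬ Associated p q) := by
  constructor
  · intro h
    -- The irreducibles chosen by `Quotient.out` from their associate classes.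
    let S : Set A := {p | Irreducible p ∧ Quotient.out (Associates.mk p) = p}
    have hrep : ∀ p : A, Irreducible p → ∃ q ∈ S, Associated q p := by
      intro p hp
      have hmk : Associates.mk (Quotient.out (Associates.mk p)) = Associates.mk p :=
        Quotient.out_eq _
      have hass : Associated (Quotient.out (Associates.mk p)) p :=
        Associates.mk_eq_mk_iff_associated.1 hmk
      exact ⟨_, ⟨hass.symm.irreducible hp, by rw [hmk]⟩, hass⟩
    refine ⟨S, ?_, fun p hp => hp.1, fun p hp q hq hne hass => hne ?_⟩
    swap
    · rw [← hp.2, ← hq.2, Associates.mk_eq_mk_iff_associated.2 hass]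
    intro hfin
    let a : A := ∏ p ∈ hfin.toFinset, p
    have ha0 : a ≠ 0 := Finset.prod_ne_zero_iff.2 fun p hp =>
      ((hfin.mem_toFinset.1 hp).1).ne_zero
    have hda : ∀ p : A, Irreducible p → p ∣ a := by
      intro p hp
      obtain ⟨q, hq, hqp⟩ := hrep p hp
      exact hqp.symm.dvd.trans (Finset.dvd_prod_of_mem _ (hfin.mem_toFinset.2 hq))
    have hnu : ¬ IsUnit (C a * X - 1 : A[X]) := by
      intro hu
      have hdeg := natDegree_eq_zero_of_isUnit hu
      rw [show (C a * X - 1 : A[X]) = C a * X + C (-1) by simp [sub_eq_add_neg],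
        natDegree_linear ha0] at hdeg
      exact one_ne_zero hdeg
    obtain ⟨M, hM, hmem⟩ := exists_max_ideal_of_mem_nonunits hnu
    have hbot : M.under A = ⊥ := by
      by_contra hne
      obtain ⟨p, hp, hpp⟩ := Ideal.IsPrime.exists_mem_prime_of_ne_bot
        (inferInstance : (M.under A).IsPrime) hne
      have haM : C a ∈ M :=
        M.mem_of_dvd (map_dvd C (hda p hpp.irreducible)) (Ideal.mem_comap.1 hp)
      refine hM.ne_top (M.eq_top_iff_one.2 ?_)
      simpa using M.sub_mem (M.mul_mem_right X haM) hmem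
    have hht := h M hM
    rw [← PrimeSpectrum.height_eq_orderHeight] at hht
    change M.height = 2 at hht
    rw [height_eq_height_add_one (M.under A) M, hbot, Ideal.height_bot] at hht
    norm_num at hht
  · rintro ⟨S, hS, hirr, hna⟩ M hM
    have := isJacobsonRing_of_infinite_irreducibles hS hirr hna
    have hA : ¬ IsField A := by
      intro hA
      obtain ⟨p, hp⟩ := hS.nonempty
      let := hA.toField
      exact (hirr p hp).not_isUnit (isUnit_iff_ne_zero.2 (hirr p hp).ne_zero)
    have hbot : M.under A ≠ ⊥ := by
      intro h0
      have hmax : (M.under A).IsMaximal :=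
        Polynomial.isMaximal_comap_C_of_isMaximal M fun x hx => by
          have : x ∈ M.under A := Ideal.mem_comap.2 hx
          rwa [h0] at this
      exact Ring.ne_bot_of_isMaximal_of_not_isField hmax hA h0
    have : (M.under A).IsMaximal := IsPrime.to_maximal_ideal hbot
    rw [← PrimeSpectrum.height_eq_orderHeight]
    change M.height = 2
    rw [height_eq_height_add_one (M.under A) M,
      IsPrincipalIdealRing.height_eq_one_of_isMaximal _ hA]
    norm_num
end

section
/- Let A be a principal ideal domain such that every maximal ideal of the polynomial ring A[x] has height 2. Then A contains infinitely many pairwise nonassociate irreducible elements, i.e., there is an infinite set of irreducible elements of A no two of which are associates. -/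
open Polynomial

/-!
If `A` had only finitely many irreducibles up to associates, let `a ≠ 0` be the product of a set of
representatives. Every nonzero element of `A` is a product of a unit and divisors of `a`, so the
localization `A[1/a] ≅ A[x]/(ax - 1)` is a field. Hence `(ax - 1)` is a maximal ideal of `A[x]`;
being principal in a Noetherian ring, it has height at most `1` by Krull's principal ideal theorem,
against the hypothesis that every maximal ideal has height `2`.
-/

theorem isUnit_algebraMap_away_of_prime_dvd {A : Type*} [CommRing A] [IsDomain A]
    [IsPrincipalIdealRing A] {a : A} (ha : ∀ p : A, Prime p → p ∣ a) {r : A} (hr : r ≠ 0) :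
    IsUnit (algebraMap A (Localization.Away a) r) := by
  induction r using UniqueFactorizationMonoid.induction_on_prime with
  | h₁ => exact absurd rfl hr
  | h₂ x hx => exact hx.map _
  | h₃ x p hx hp ih =>
    rw [map_mul]
    exact (isUnit_of_dvd_unit (map_dvd _ (ha p hp))
      (IsLocalization.Away.algebraMap_isUnit a)).mul (ih hx)

theorem isField_away_of_prime_dvd {A : Type*} [CommRing A] [IsDomain A]
    [IsPrincipalIdealRing A] {a : A} (ha0 : a ≠ 0) (ha : ∀ p : A, Prime p → p ∣ a) :
    IsField (Localization.Away a) := by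
  have hle : Submonoid.powers a ≤ nonZeroDivisors A := powers_le_nonZeroDivisors_of_noZeroDivisors ha0
  have : IsDomain (Localization.Away a) := IsLocalization.isDomain_localization hle
  refine ⟨⟨0, 1, zero_ne_one⟩, mul_comm, fun {x} hx => ?_⟩
  obtain ⟨⟨r, s⟩, hrs⟩ := IsLocalization.surj (Submonoid.powers a) x
  have hr : r ≠ 0 := by
    rintro rfl
    have hs := IsLocalization.map_units (Localization.Away a) s
    simp only [map_zero] at hrs
    exact (mul_ne_zero hx hs.ne_zero) hrs
  have hu := isUnit_algebraMap_away_of_prime_dvd ha hr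
  rw [← hrs] at hu
  exact (isUnit_of_mul_isUnit_left hu).exists_right_inv

theorem infinitely_many_irreducibles_of_maximal_height_two
    (A : Type*) [CommRing A] [IsDomain A] [IsPrincipalIdealRing A]
    (h : ∀ (M : Ideal A[X]) (hM : M.IsMaximal),
      Order.height (⟨M, hM.isPrime⟩ : PrimeSpectrum A[X]) = 2) :
    ∃ S : Set A, S.Infinite ∧ (∀ p ∈ S, Irreducible p) ∧
      ∀ p ∈ S, ∀ q ∈ S, p ≠ q → ¬ Associated p q := by
  -- `Quotient.out` picks one representative in each class of irreducibles.
  have hout : ∀ c : Associates A, Associates.mk (Quotient.out c) = c := Associates.quot_out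
  refine ⟨Quotient.out '' {c : Associates A | Irreducible c}, ?_, ?_, ?_⟩
  · rw [Set.infinite_image_iff Quotient.out_injective.injOn]
    intro hfin
    set a : A := ∏ c ∈ hfin.toFinset, Quotient.out c with ha_def
    have ha0 : a ≠ 0 := by
      refine Finset.prod_ne_zero_iff.mpr fun c hc => ?_
      have hc' : Irreducible c := by simpa using hc
      rw [← hout c, Associates.irreducible_mk] at hc'
      exact hc'.ne_zero
    have ha : ∀ p : A, Prime p → p ∣ a := by
      intro p hp
      have hmem : Associates.mk p ∈ hfin.toFinset := by
        simpa [Associates.irreducible_mk] using hp.irreducible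
      exact ((Associates.mk_eq_mk_iff_associated.mp (hout (Associates.mk p))).symm.dvd).trans
        (Finset.dvd_prod_of_mem _ hmem)
    have hF : IsField (A[X] ⧸ Ideal.span {C a * X - 1}) :=
      (Localization.awayEquivAdjoin a).symm.toMulEquiv.isField (isField_away_of_prime_dvd ha0 ha)
    have hM := Ideal.Quotient.maximal_of_isField _ hF
    have hprime := hM.isPrime
    have h2 := h _ hM
    rw [← PrimeSpectrum.height_eq_orderHeight] at h2
    have h1 : (Ideal.span {C a * X - 1}).height ≤ 1 :=
      Ideal.height_le_one_of_isPrincipal_of_mem_minimalPrimes (Ideal.span {C a * X - 1}) _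
        (by rw [Ideal.minimalPrimes_eq_subsingleton_self]; rfl)
    rw [h2] at h1
    exact absurd h1 (by decide)
  · rintro _ ⟨c, hc, rfl⟩
    rw [← Associates.irreducible_mk, hout]
    exact hc
  · rintro _ ⟨c, -, rfl⟩ _ ⟨d, -, rfl⟩ hne hass
    rw [← Associates.mk_eq_mk_iff_associated, hout, hout] at hass
    exact hne (congrArg _ hass)
end

section
/- Let A be a principal ideal domain, let p be an irreducible element of A, and suppose g(x) in A[x] generates a maximal ideal of A[x]. Then the ideal (g(x), p) of A[x] is the unit ideal, and consequently every coefficient of g(x) other than its constant term is divisible by p. -/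
/-!
If `(g, p)` were proper, maximality of `(g)` would give `g ∣ p`, so by degree `g = C a` is a
constant; but a constant never generates a maximal ideal of `A[X]`, since `(a, X)` is a proper
ideal strictly larger than `(a)` when `a` is not a unit. Once `(g, p)` is the unit ideal,
the reduction of `g` is a unit of `(A ⧸ (p))[X]`. As `p` is prime, this is a polynomial ring over a
domain, whose units are constants, so every nonconstant coefficient of `g` vanishes modulo `p`.
-/

open Polynomial

theorem not_isMaximal_span_C {A : Type*} [CommRing A] (a : A) :
    ¬ (Ideal.span ({C a} : Set A[X])).IsMaximal := by
  intro h
  have ha : ¬ IsUnit a := fun hu =>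
    h.ne_top (Ideal.span_singleton_eq_top.2 (hu.map C))
  apply ha
  by_cases hX : (X : A[X]) ∈ Ideal.span ({C a} : Set A[X])
  · rw [Ideal.mem_span_singleton, C_dvd_iff_dvd_coeff] at hX
    exact isUnit_of_dvd_one (by simpa using hX 1)
  · obtain ⟨y, i, hi, hyi⟩ := h.exists_inv hX
    rw [Ideal.mem_span_singleton, C_dvd_iff_dvd_coeff] at hi
    -- the constant term of `y * X + i = 1`
    have h0 := congrArg (fun f : A[X] => f.coeff 0) hyi
    simp only [coeff_add, mul_coeff_zero, coeff_X_zero, mul_zero, zero_add, coeff_one_zero] at h0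
    exact isUnit_of_dvd_one (h0 ▸ hi 0)

theorem span_pair_eq_top_and_dvd_coeff
    (A : Type*) [CommRing A] [IsDomain A] [IsPrincipalIdealRing A]
    (p : A) (hp : Irreducible p) (g : A[X])
    (hg : (Ideal.span ({g} : Set A[X])).IsMaximal) :
    Ideal.span ({g, C p} : Set A[X]) = ⊤ ∧ ∀ n : ℕ, n ≠ 0 → p ∣ g.coeff n := by
  have htop : Ideal.span ({g, C p} : Set A[X]) = ⊤ := by
    by_contra hne
    have heq := hg.eq_of_le hne (Ideal.span_mono (by simp))
    have hmem : C p ∈ Ideal.span ({g} : Set A[X]) := by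
      rw [heq]
      exact Ideal.subset_span (by simp)
    have hdvd : g ∣ C p := Ideal.mem_span_singleton.1 hmem
    have hdeg : g.natDegree = 0 := by
      simpa using natDegree_le_of_dvd hdvd (C_ne_zero.2 hp.ne_zero)
    rw [eq_C_of_natDegree_eq_zero hdeg] at hg
    exact not_isMaximal_span_C _ hg
  refine ⟨htop, fun n hn => ?_⟩
  have hprime : (Ideal.span ({p} : Set A)).IsPrime :=
    (Ideal.span_singleton_prime hp.ne_zero).2 hp.prime
  obtain ⟨u, v, huv⟩ := Ideal.mem_span_pair.1 ((Ideal.eq_top_iff_one _).1 htop)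
  let π := Ideal.Quotient.mk (Ideal.span ({p} : Set A))
  have hπp : π p = 0 := Ideal.Quotient.eq_zero_iff_mem.2 (Ideal.mem_span_singleton_self p)
  have hunit : IsUnit (g.map π) := by
    refine IsUnit.of_mul_eq_one_right (u.map π) ?_
    simpa [hπp] using congrArg (Polynomial.map π) huv
  have hcoeff : (g.map π).coeff n = 0 :=
    coeff_eq_zero_of_natDegree_lt (by
      rw [natDegree_eq_zero_of_isUnit hunit]
      exact Nat.pos_of_ne_zero hn)
  rw [coeff_map] at hcoeff
  exact Ideal.mem_span_singleton.1 (Ideal.Quotient.eq_zero_iff_mem.1 hcoeff)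
end
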